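/- arXiv:0810.4815 — 3 statements merged into one kernel-verified Lean document; each statement's English description precedes it below -/
import Mathlib

section
/- For n ≥ 1, every derivation of the matrix algebra M_n(ℂ) is inner; more precisely, for every ℂ-linear map D : M_n(ℂ) → M_n(ℂ) satisfying D(ab) = D(a)b + aD(b) for all a,b, there exists a unique matrix γ ∈ M_n(ℂ) with tr(γ) = 0 such that D(a) = γa − aγ for all a ∈ M_n(ℂ). Consequently the map γ ↦ ad_γ is a Lie algebra isomorphism from sl(n,ℂ) (traceless matrices with the commutator bracket) onto Der(M_n(ℂ)). -/
/-!
Fix an index `o` and put `γ = ∑ i, D (E i o) * E o i`. Applying the Leibniz rule to `a * E i o`,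
multiplying by `E o i` on the right and summing over `i` gives
`∑ i, D (a * E i o) * E o i = D a + a * γ`, since `∑ i, E i i = 1`. Expanding `a * E i o` along the
column `o`, by linearity of `D` the left-hand side is also `γ * a`. Hence `D = ad γ`.
Subtracting the scalar matrix `tr γ / n` makes `γ` traceless without changing `ad γ`.
Uniqueness holds because two choices of `γ` differ by a central, hence scalar, matrix,
and a traceless scalar matrix of size `n ≥ 1` over `ℂ` is zero.
-/

/-- A derivation of a unital associative ℂ-algebra `A`. -/
def IsDerivation {A : Type*} [Ring A] [Algebra ℂ A] (X : A →ₗ[ℂ] A) : Prop :=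
  ∀ a b : A, X (a * b) = X a * b + a * X b

/-- The inner derivation `ad_γ : a ↦ γ*a - a*γ`. -/
def ad {A : Type*} [Ring A] [Algebra ℂ A] (γ : A) : A →ₗ[ℂ] A :=
  LinearMap.mulLeft ℂ γ - LinearMap.mulRight ℂ γ

open Matrix in
lemma mul_single_expand {n : ℕ} (o i : Fin n) (a : Matrix (Fin n) (Fin n) ℂ) :
    a * single i o (1 : ℂ) = ∑ k, a k i • single k o (1 : ℂ) := by
  ext p q
  simp [Matrix.sum_apply, Matrix.mul_apply, Matrix.single_apply, ite_and]

open Matrix in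
lemma single_mul_expand {n : ℕ} (o k : Fin n) (a : Matrix (Fin n) (Fin n) ℂ) :
    single o k (1 : ℂ) * a = ∑ i, a k i • single o i (1 : ℂ) := by
  ext p q
  simp [Matrix.sum_apply, Matrix.mul_apply, Matrix.single_apply, ite_and]

open Matrix in
lemma sum_single_mul_single {n : ℕ} (o : Fin n) :
    ∑ i : Fin n, single i o (1 : ℂ) * single o i (1 : ℂ) = 1 := by
  ext p q
  simp [Matrix.sum_apply, Matrix.single_apply, Matrix.one_apply, ite_and]

open Matrix in
/-- The implementing matrix is `∑ i, D (E i o) * E o i`, for any choice of the index `o`. -/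
lemma exists_inner {n : ℕ} (o : Fin n)
    (D : Matrix (Fin n) (Fin n) ℂ →ₗ[ℂ] Matrix (Fin n) (Fin n) ℂ) (hD : IsDerivation D) :
    ∃ γ : Matrix (Fin n) (Fin n) ℂ, ∀ a, D a = γ * a - a * γ := by
  refine ⟨∑ i, D (single i o 1) * single o i 1, fun a => ?_⟩
  have h1 : ∑ i, D (a * single i o 1) * single o i 1
      = D a + a * ∑ i, D (single i o 1) * single o i 1 := by
    simp_rw [hD a, add_mul, Finset.sum_add_distrib, mul_assoc, ← Finset.mul_sum]
    rw [sum_single_mul_single, mul_one]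
  have h2 : ∑ i, D (a * single i o 1) * single o i 1
      = (∑ i, D (single i o 1) * single o i 1) * a := by
    have hl : ∀ i, D (a * single i o 1) * single o i 1
        = ∑ k, a k i • (D (single k o 1) * single o i 1) := fun i => by
      rw [mul_single_expand o i a, map_sum, Finset.sum_mul]
      exact Finset.sum_congr rfl fun k _ => by rw [map_smul, smul_mul_assoc]
    have hr : ∀ k, D (single k o 1) * single o k 1 * a
        = ∑ i, a k i • (D (single k o 1) * single o i 1) := fun k => by
      rw [mul_assoc, single_mul_expand o k a, Finset.mul_sum]
      exact Finset.sum_congr rfl fun i _ => by rw [mul_smul_comm]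
    rw [Finset.sum_mul, Finset.sum_congr rfl fun i _ => hl i, Finset.sum_congr rfl fun k _ => hr k]
    exact Finset.sum_comm
  rw [← h2, h1, add_sub_cancel_right]

/-- Every derivation of `M_n(ℂ)` is inner: it equals `ad_γ` for a unique
traceless matrix `γ`.  Moreover `γ ↦ ad_γ` is a morphism of Lie algebras, so
that it realizes a Lie algebra isomorphism `sl(n,ℂ) ≃ Der(M_n(ℂ))`. -/
theorem derivations_of_matrix_algebra_inner {n : ℕ} (hn : 1 ≤ n)
    (D : Matrix (Fin n) (Fin n) ℂ →ₗ[ℂ] Matrix (Fin n) (Fin n) ℂ)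
    (hD : IsDerivation D) :
    (∃! γ : Matrix (Fin n) (Fin n) ℂ,
        Matrix.trace γ = 0 ∧ ∀ a, D a = γ * a - a * γ) ∧
    (∀ γ η : Matrix (Fin n) (Fin n) ℂ,
        ad (γ * η - η * γ) = ad γ ∘ₗ ad η - ad η ∘ₗ ad γ) := by
  have hn0 : (n : ℂ) ≠ 0 := by exact_mod_cast (by omega : n ≠ 0)
  refine ⟨?_, fun γ η => ?_⟩
  · obtain ⟨γ, hγ⟩ := exists_inner ⟨0, hn⟩ D hD
    refine ⟨γ - (γ.trace / n) • 1, ⟨?_, fun a => ?_⟩, ?_⟩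
    · simp [Matrix.trace_sub, Matrix.trace_smul, hn0]
    · rw [hγ a]
      simp [sub_mul, mul_sub]
    · rintro η ⟨hη, hη'⟩
      set δ := γ - (γ.trace / n) • (1 : Matrix (Fin n) (Fin n) ℂ) with hδ
      have htr : (η - δ).trace = 0 := by
        simp [hδ, Matrix.trace_sub, Matrix.trace_smul, hn0, hη]
      have hcomm : ∀ a, Commute a (η - δ) := fun a => by
        have h : η * a - a * η = γ * a - a * γ := (hη' a).symm.trans (hγ a)
        have h' : (η - δ) * a - a * (η - δ) = 0 := by
          have : (η - δ) * a - a * (η - δ) = (η * a - a * η) - (γ * a - a * γ) := by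
            simp only [hδ, sub_mul, mul_sub, smul_mul_assoc, mul_smul_comm, one_mul, mul_one]
            abel
          rw [this, h, sub_self]
        exact (sub_eq_zero.mp h').symm
      obtain ⟨c, hc⟩ := Matrix.mem_range_scalar_of_commute_single (M := η - δ)
        fun i j _ => hcomm _
      rw [← hc] at htr
      have hc0 : c = 0 := by
        simpa [Matrix.trace, hn0] using htr
      rw [hc0, map_zero] at hc
      exact sub_eq_zero.mp hc.symm
  · refine LinearMap.ext fun a => ?_
    simp only [ad, LinearMap.sub_apply, LinearMap.comp_apply, LinearMap.mulLeft_apply,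
      LinearMap.mulRight_apply]
    noncomm_ring
end

section
/- Let n, r ≥ 1 and let M = M_{r,n}(ℂ) be the right M_n(ℂ)-module of r×n complex matrices. Every noncommutative connection ∇ on M is of the form ∇_{ad_γ} m = −mγ + A(γ)m, where A : sl(n,ℂ) → M_r(ℂ) is a ℂ-linear map, and its curvature satisfies R(ad_γ, ad_η) m = ([A(γ), A(η)] − A([γ,η])) m for all traceless γ, η. In particular the curvature of ∇ vanishes identically if and only if A is a Lie algebra homomorphism from sl(n,ℂ) to M_r(ℂ) (i.e. a representation of sl(n,ℂ) on ℂ^r). -/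
/-!
The operator `m ↦ ∇_{ad_γ} m + m γ` is right `M_n(ℂ)`-linear, because the Leibniz term `m (ad_γ a)`
is exactly compensated by the defect of `m ↦ m γ`. Since `M_{r,n}(ℂ)` is generated over `M_n(ℂ)` by
the matrix units in a single column, a right-linear operator is left multiplication by an `r × r`
matrix (`exists_eq_mul_left_of_right_linear`), unique since `n ≥ 1`
(`eq_of_forall_mul_left_eq`). This matrix is `A γ`; uniqueness makes `A` linear. The curvature formula
is then a direct computation, the operators `m ↦ A γ * m` and `m ↦ m * η` commuting.

To pass from representations back to flatness one needs every derivation of `M_n(ℂ)` to be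
inner with a traceless generator: `γ = ∑ i, X(E_{i0}) E_{0i}` generates `X`
(`IsDerivation.exists_eq_ad`), and its trace is removed by subtracting a scalar matrix.
-/

open LinearMap Matrix

/-- The Lie algebra of derivations of `A` (as a subtype of linear maps). -/
abbrev Der (A : Type*) [Ring A] [Algebra ℂ A] := {X : A →ₗ[ℂ] A // IsDerivation X}

/-- A noncommutative connection on the right `M_n(ℂ)`-module `M_{r,n}(ℂ)`. -/
def IsConnectionMrn {n r : ℕ}
    (conn : Der (Matrix (Fin n) (Fin n) ℂ) →
      Matrix (Fin r) (Fin n) ℂ → Matrix (Fin r) (Fin n) ℂ) : Prop :=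
  (∀ (X : Der (Matrix (Fin n) (Fin n) ℂ)) (c : ℂ) (m m' : Matrix (Fin r) (Fin n) ℂ),
      conn X (c • m + m') = c • conn X m + conn X m') ∧
  (∀ (X : Der (Matrix (Fin n) (Fin n) ℂ)) (m : Matrix (Fin r) (Fin n) ℂ)
      (a : Matrix (Fin n) (Fin n) ℂ),
      conn X (m * a) = m * X.1 a + conn X m * a) ∧
  (∀ X Y Z : Der (Matrix (Fin n) (Fin n) ℂ), Z.1 = X.1 + Y.1 →
      ∀ m, conn Z m = conn X m + conn Y m) ∧
  (∀ (c : ℂ) (X Y : Der (Matrix (Fin n) (Fin n) ℂ)), Y.1 = c • X.1 →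
      ∀ m, conn Y m = c • conn X m)

lemma isDerivation_ad {A : Type*} [Ring A] [Algebra ℂ A] (γ : A) : IsDerivation (ad γ) := by
  intro a b
  simp only [ad, LinearMap.sub_apply, mulLeft_apply, mulRight_apply]
  noncomm_ring

/-- The inner derivation `ad γ`, bundled as an element of `Der A`. -/
def adDer {A : Type*} [Ring A] [Algebra ℂ A] (γ : A) : Der A := ⟨ad γ, isDerivation_ad γ⟩

lemma ad_smul_add {A : Type*} [Ring A] [Algebra ℂ A] (c : ℂ) (γ η : A) :
    ad (c • γ + η) = c • ad γ + ad η := by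
  ext a
  simp only [ad, LinearMap.sub_apply, LinearMap.add_apply, LinearMap.smul_apply, mulLeft_apply,
    mulRight_apply, add_mul, mul_add, smul_mul_assoc, mul_smul_comm, smul_sub]
  abel

lemma ad_commutator {A : Type*} [Ring A] [Algebra ℂ A] (γ η : A) :
    ad (γ * η - η * γ) = ad γ ∘ₗ ad η - ad η ∘ₗ ad γ := by
  ext a
  simp only [ad, LinearMap.sub_apply, LinearMap.comp_apply, mulLeft_apply, mulRight_apply]
  noncomm_ring

lemma exists_eq_mul_left_of_right_linear {n r : ℕ} (hn : 1 ≤ n)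
    (T : Matrix (Fin r) (Fin n) ℂ →+ Matrix (Fin r) (Fin n) ℂ)
    (hT : ∀ m (a : Matrix (Fin n) (Fin n) ℂ), T (m * a) = T m * a) :
    ∃ B : Matrix (Fin r) (Fin r) ℂ, ∀ m, T m = B * m := by
  let z : Fin n := ⟨0, hn⟩
  refine ⟨Matrix.of fun i k => T (Matrix.single k z 1) i z, fun m => ?_⟩
  -- The generators are the units `E_{k0}`; the coefficient of `E_{k0}` carries row `k` of `m`.
  have hm : m = ∑ k, Matrix.single k z (1 : ℂ) *
      (Matrix.of fun i j => if i = z then m k j else 0 : Matrix (Fin n) (Fin n) ℂ) := by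
    ext i j
    simp [Matrix.sum_apply, Matrix.mul_apply, Matrix.single_apply, ite_and]
  conv_lhs => rw [hm]
  rw [map_sum]
  ext i j
  simp [hT, Matrix.sum_apply, Matrix.mul_apply]

lemma eq_of_forall_mul_left_eq {n r : ℕ} (hn : 1 ≤ n) {B C : Matrix (Fin r) (Fin r) ℂ}
    (h : ∀ m : Matrix (Fin r) (Fin n) ℂ, B * m = C * m) : B = C := by
  ext i k
  have := congrFun (congrFun (h (Matrix.single k ⟨0, hn⟩ 1)) i) ⟨0, hn⟩
  simpa using this

lemma IsDerivation.exists_eq_ad {n : ℕ} (hn : 1 ≤ n)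
    {X : Matrix (Fin n) (Fin n) ℂ →ₗ[ℂ] Matrix (Fin n) (Fin n) ℂ} (hX : IsDerivation X) :
    ∃ γ : Matrix (Fin n) (Fin n) ℂ, X = ad γ := by
  let z : Fin n := ⟨0, hn⟩
  refine ⟨∑ i, X (Matrix.single i z 1) * Matrix.single z i 1, ?_⟩
  ext1 a
  have hone : ∑ i, Matrix.single i z (1 : ℂ) * Matrix.single z i 1 = 1 := by
    simp [Matrix.sum_single_one]
  have hcol : ∀ i, a * Matrix.single i z (1 : ℂ) = ∑ k, a k i • Matrix.single k z (1 : ℂ) := by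
    intro i
    ext p q
    simp [Matrix.sum_apply, Matrix.mul_apply, Matrix.single_apply, ite_and]
  have hrow : ∀ k, Matrix.single z k (1 : ℂ) * a = ∑ i, a k i • Matrix.single z i (1 : ℂ) := by
    intro i
    ext p q
    simp [Matrix.sum_apply, Matrix.mul_apply, Matrix.single_apply, ite_and]
  have hXcol : ∀ i, X a * Matrix.single i z 1 + a * X (Matrix.single i z 1)
      = ∑ k, a k i • X (Matrix.single k z (1 : ℂ)) := by
    intro i
    rw [← hX, hcol, map_sum]
    simp only [map_smul]
  have key : X a + a * (∑ i, X (Matrix.single i z 1) * Matrix.single z i 1)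
      = (∑ i, X (Matrix.single i z 1) * Matrix.single z i 1) * a := by
    calc _ = ∑ i, (X a * Matrix.single i z 1 + a * X (Matrix.single i z 1))
            * Matrix.single z i 1 := by
          simp only [add_mul, Finset.sum_add_distrib, mul_assoc, ← Finset.mul_sum]
          rw [hone, mul_one]
      _ = _ := by
          simp only [hXcol, Finset.sum_mul, mul_assoc, hrow, Finset.mul_sum]
          rw [Finset.sum_comm]
          simp only [smul_mul_assoc, mul_smul_comm]
  simp only [ad, LinearMap.sub_apply, mulLeft_apply, mulRight_apply]
  rw [← key]
  abel

lemma IsDerivation.exists_traceless_eq_ad {n : ℕ} (hn : 1 ≤ n)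
    {X : Matrix (Fin n) (Fin n) ℂ →ₗ[ℂ] Matrix (Fin n) (Fin n) ℂ} (hX : IsDerivation X) :
    ∃ γ : Matrix (Fin n) (Fin n) ℂ, Matrix.trace γ = 0 ∧ X = ad γ := by
  obtain ⟨γ, rfl⟩ := hX.exists_eq_ad hn
  refine ⟨γ - (Matrix.trace γ / n) • 1, ?_, ?_⟩
  · have : (n : ℂ) ≠ 0 := by exact_mod_cast (by omega : n ≠ 0)
    simp [Matrix.trace_sub, Matrix.trace_smul, Matrix.trace_one, this]
  · ext1 a
    simp [ad, sub_mul, mul_sub]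

/-- Every noncommutative connection on `M_{r,n}(ℂ)` has the form
`∇_{ad_γ} m = −m·γ + A(γ)·m` for a ℂ-linear `A : sl(n,ℂ) → M_r(ℂ)`, its
curvature is `R(ad_γ, ad_η) m = ([A(γ),A(η)] − A([γ,η]))·m`, and it is flat if
and only if `A` is a Lie algebra homomorphism `sl(n,ℂ) → M_r(ℂ)`. -/
theorem connections_on_Mrn_classification {n r : ℕ} (hn : 1 ≤ n) (hr : 1 ≤ r)
    (conn : Der (Matrix (Fin n) (Fin n) ℂ) →
      Matrix (Fin r) (Fin n) ℂ → Matrix (Fin r) (Fin n) ℂ)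
    (h : IsConnectionMrn conn) :
    ∃ A : Matrix (Fin n) (Fin n) ℂ → Matrix (Fin r) (Fin r) ℂ,
      (∀ (c : ℂ) (γ η : Matrix (Fin n) (Fin n) ℂ),
        Matrix.trace γ = 0 → Matrix.trace η = 0 →
        A (c • γ + η) = c • A γ + A η) ∧
      (∀ γ : Matrix (Fin n) (Fin n) ℂ, Matrix.trace γ = 0 →
        ∀ X : Der (Matrix (Fin n) (Fin n) ℂ), X.1 = ad γ →
          ∀ m, conn X m = -(m * γ) + A γ * m) ∧
      (∀ γ η : Matrix (Fin n) (Fin n) ℂ,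
        Matrix.trace γ = 0 → Matrix.trace η = 0 →
        ∀ X Y B : Der (Matrix (Fin n) (Fin n) ℂ),
          X.1 = ad γ → Y.1 = ad η → B.1 = ad (γ * η - η * γ) →
          ∀ m, conn X (conn Y m) - conn Y (conn X m) - conn B m
            = (A γ * A η - A η * A γ - A (γ * η - η * γ)) * m) ∧
      ((∀ X Y B : Der (Matrix (Fin n) (Fin n) ℂ),
          B.1 = X.1 ∘ₗ Y.1 - Y.1 ∘ₗ X.1 →
          ∀ m, conn X (conn Y m) - conn Y (conn X m) - conn B m = 0) ↔
        (∀ γ η : Matrix (Fin n) (Fin n) ℂ,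
          Matrix.trace γ = 0 → Matrix.trace η = 0 →
          A (γ * η - η * γ) = A γ * A η - A η * A γ)) := by
  obtain ⟨hlin, hleib, hadd, hsmul⟩ := h
  have hex : ∀ γ : Matrix (Fin n) (Fin n) ℂ, ∃ B : Matrix (Fin r) (Fin r) ℂ,
      ∀ m, conn (adDer γ) m + m * γ = B * m := by
    intro γ
    refine exists_eq_mul_left_of_right_linear hn
      (AddMonoidHom.mk' (fun m => conn (adDer γ) m + m * γ) ?_) ?_
    · intro m m'
      have := hlin (adDer γ) 1 m m'
      simp only [one_smul] at this
      rw [this, Matrix.add_mul]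
      abel
    · intro m a
      simp only [AddMonoidHom.mk'_apply, hleib, adDer, ad, LinearMap.sub_apply, mulLeft_apply,
        mulRight_apply, Matrix.mul_sub, Matrix.add_mul, Matrix.mul_assoc]
      abel
  choose A hA using hex
  have hform : ∀ γ (X : Der (Matrix (Fin n) (Fin n) ℂ)), X.1 = ad γ →
      ∀ m, conn X m = -(m * γ) + A γ * m := by
    intro γ X hX m
    obtain rfl : X = adDer γ := Subtype.ext hX
    rw [← hA]
    abel
  have hcurv : ∀ γ η : Matrix (Fin n) (Fin n) ℂ, ∀ X Y B : Der (Matrix (Fin n) (Fin n) ℂ),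
      X.1 = ad γ → Y.1 = ad η → B.1 = ad (γ * η - η * γ) →
      ∀ m, conn X (conn Y m) - conn Y (conn X m) - conn B m
        = (A γ * A η - A η * A γ - A (γ * η - η * γ)) * m := by
    intro γ η X Y B hX hY hB m
    simp only [hform γ X hX, hform η Y hY, hform _ B hB, Matrix.mul_add, Matrix.add_mul,
      Matrix.mul_sub, Matrix.sub_mul, Matrix.mul_neg, Matrix.neg_mul, Matrix.mul_assoc]
    abel
  refine ⟨A, ?_, fun γ _ => hform γ, fun γ η _ _ => hcurv γ η, ?_, ?_⟩
  · intro c γ η _ _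
    refine eq_of_forall_mul_left_eq hn fun m => ?_
    have h1 := hadd (adDer (c • γ)) (adDer η) (adDer (c • γ + η))
      (by simpa [adDer] using ad_smul_add 1 (c • γ) η) m
    have h2 := hsmul c (adDer γ) (adDer (c • γ))
      (by ext1 a; simp [adDer, ad, smul_sub]) m
    rw [← hA, h1, h2, Matrix.add_mul, Matrix.smul_mul, ← hA, ← hA, Matrix.mul_add,
      Matrix.mul_smul, smul_add]
    abel
  · intro hflat γ η _ _
    have h0 : A γ * A η - A η * A γ - A (γ * η - η * γ) = 0 := by
      refine eq_of_forall_mul_left_eq hn fun m => ?_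
      rw [← hcurv γ η (adDer γ) (adDer η) (adDer (γ * η - η * γ)) rfl rfl rfl, Matrix.zero_mul]
      exact hflat _ _ _ (ad_commutator γ η) m
    exact (sub_eq_zero.mp h0).symm
  · intro hrep X Y B hB m
    obtain ⟨γ, hγ, hX⟩ := X.2.exists_traceless_eq_ad hn
    obtain ⟨η, hη, hY⟩ := Y.2.exists_traceless_eq_ad hn
    rw [hcurv γ η X Y B hX hY (by rw [hB, hX, hY, ad_commutator]), hrep γ η hγ hη, sub_self,
      Matrix.zero_mul]
end

section
/- Let C be a commutative unital ℂ-algebra and n ≥ 1. Every derivation D of the matrix algebra M_n(C) decomposes uniquely as D = X̃ + ad_γ, where X is a derivation of C, X̃ is the entrywise application of X to matrices (X̃(a)_{ij} = X(a_{ij})), and γ ∈ M_n(C) is a matrix with tr(γ) = 0, ad_γ(a) = γa − aγ. Hence Der(M_n(C)) = Der(C) ⊕ sl_n(C) as Lie algebras and C-modules, Int(M_n(C)) ≅ sl_n(C), and Out(M_n(C)) ≅ Der(C). (Applied to C = C^∞(M), this gives Der(C^∞(M) ⊗ M_n(ℂ)) = Γ(M) ⊕ (C^∞(M) ⊗ sl_n).)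 -/
open Matrix in
/-- The map `c ↦ (D (E o o c)) o o` read off from the `(o, o)` corner of the matrix algebra. -/
def cornerMap {C : Type*} [CommRing C] [Algebra ℂ C] {n : ℕ} (o : Fin n)
    (D : Matrix (Fin n) (Fin n) C →ₗ[ℂ] Matrix (Fin n) (Fin n) C) : C →ₗ[ℂ] C where
  toFun c := D (single o o c) o o
  map_add' c d := by rw [single_add, map_add, Matrix.add_apply]
  map_smul' r c := by rw [← smul_single, map_smul]; rfl

theorem IsDerivation.map_one_eq_zero {A : Type*} [Ring A] [Algebra ℂ A] {X : A →ₗ[ℂ] A}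
    (hX : IsDerivation X) : X 1 = 0 := by
  simpa using hX 1 1

theorem IsDerivation.isDerivation_cornerMap {C : Type*} [CommRing C] [Algebra ℂ C] {n : ℕ} (o : Fin n)
    {D : Matrix (Fin n) (Fin n) C →ₗ[ℂ] Matrix (Fin n) (Fin n) C} (hD : IsDerivation D) :
    IsDerivation (cornerMap o D) := by
  intro c d
  change D (Matrix.single o o (c * d)) o o =
    D (Matrix.single o o c) o o * d + c * D (Matrix.single o o d) o o
  rw [← Matrix.single_mul_single_same (i := o) (j := o) (k := o), hD]
  simp

open Matrix in
/-- The decomposition `D = X̃ + ad_γ` before `γ` is normalised to have trace zero. -/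
theorem IsDerivation.eq_corner_add_inner {C : Type*} [CommRing C] [Algebra ℂ C] {n : ℕ}
    (o : Fin n) {D : Matrix (Fin n) (Fin n) C →ₗ[ℂ] Matrix (Fin n) (Fin n) C}
    (hD : IsDerivation D) (a : Matrix (Fin n) (Fin n) C) :
    D a = Matrix.of (fun i j => cornerMap o D (a i j)) +
      ((∑ k, D (single k o 1) * single o k 1) * a - a * ∑ k, D (single k o 1) * single o k 1) := by
  set γ := ∑ k, D (single k o 1) * single o k (1 : C) with hγ
  set δ := ∑ l, single l o (1 : C) * D (single o l 1) with hδ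
  have hsum : γ + δ = 0 := by
    rw [← hD.map_one_eq_zero, ← sum_single_one, map_sum, hγ, hδ, ← Finset.sum_add_distrib]
    refine Finset.sum_congr rfl fun k _ => ?_
    rw [← hD]
    simp
  have hterm (k l : Fin n) (c : C) : D (single k l c) =
      D (single k o 1) * single o l c + single k l (cornerMap o D c)
        + single k o c * D (single o l 1) := by
    have h : single k l c = single k o 1 * (single o o c * single o l 1) := by simp
    rw [h, hD, hD, mul_add, ← mul_assoc _ (D _), single_mul_mul_single, ← add_assoc, mul_assoc]
    rw [← mul_assoc (single k o 1) (single o o c)]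
    simp [cornerMap]
  have h1 : γ * a = ∑ k, ∑ l, D (single k o 1) * single o l (a k l) := by
    rw [hγ, Finset.sum_mul]
    refine Finset.sum_congr rfl fun k _ => ?_
    rw [mul_assoc, ← Finset.mul_sum]
    congr 1
    ext i j
    by_cases h : o = i
    · subst h; simp [Matrix.sum_apply, single_apply]
    · simp [Matrix.sum_apply, h, Ne.symm h]
  have h3 : a * δ = ∑ k, ∑ l, single k o (a k l) * D (single o l 1) := by
    rw [hδ, Finset.mul_sum, Finset.sum_comm]
    refine Finset.sum_congr rfl fun l _ => ?_
    rw [← mul_assoc, ← Finset.sum_mul]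
    congr 1
    ext i j
    by_cases h : o = j
    · subst h; simp [Matrix.sum_apply, single_apply]
    · simp [Matrix.sum_apply, h, Ne.symm h]
  have h2 : Matrix.of (fun i j => cornerMap o D (a i j))
      = ∑ k, ∑ l, single k l (cornerMap o D (a k l)) :=
    matrix_eq_sum_single _
  have hδγ : δ = -γ := by rw [eq_neg_iff_add_eq_zero, add_comm, hsum]
  rw [sub_eq_add_neg, ← mul_neg, ← hδγ, h1, h2, h3]
  conv_lhs => rw [matrix_eq_sum_single a]
  simp only [map_sum]
  rw [Finset.sum_congr rfl fun k _ => Finset.sum_congr rfl fun l _ => hterm k l (a k l)]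
  simp only [Finset.sum_add_distrib]
  abel

/-- Every derivation `D` of `M_n(C)`, `C` a commutative unital ℂ-algebra,
decomposes uniquely as `D = X̃ + ad_γ` where `X` is a derivation of `C` applied
entrywise and `γ ∈ M_n(C)` is traceless: hence
`Der(M_n(C)) = Der(C) ⊕ sl_n(C)`, `Int(M_n(C)) ≅ sl_n(C)` and
`Out(M_n(C)) ≅ Der(C)`. -/
theorem derivation_of_matrix_algebra_over_comm_decomposition
    {C : Type*} [CommRing C] [Algebra ℂ C] {n : ℕ} (hn : 1 ≤ n)
    (D : Matrix (Fin n) (Fin n) C →ₗ[ℂ] Matrix (Fin n) (Fin n) C)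
    (hD : IsDerivation D) :
    ∃! p : (C →ₗ[ℂ] C) × Matrix (Fin n) (Fin n) C,
      IsDerivation p.1 ∧ Matrix.trace p.2 = 0 ∧
      ∀ a : Matrix (Fin n) (Fin n) C,
        D a = Matrix.of (fun i j => p.1 (a i j)) + (p.2 * a - a * p.2) := by
  have hn0 : (n : ℂ) ≠ 0 := by exact_mod_cast (by omega : n ≠ 0)
  let o : Fin n := ⟨0, hn⟩
  apply existsUnique_of_exists_of_unique
  · set γ := ∑ k, D (Matrix.single k o 1) * Matrix.single o k (1 : C) with hγ
    refine ⟨(cornerMap o D, γ - ((n : ℂ)⁻¹ • γ.trace) • (1 : Matrix (Fin n) (Fin n) C)),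
      hD.isDerivation_cornerMap o, ?_, fun a => ?_⟩
    · have h : (n : C) = (n : ℂ) • (1 : C) := by simp [Algebra.smul_def]
      simp only [Matrix.trace_sub, Matrix.trace_smul, Matrix.trace_one, Fintype.card_fin, h]
      rw [smul_eq_mul, smul_mul_smul_comm, inv_mul_cancel₀ hn0, one_smul, mul_one, sub_self]
    · rw [hD.eq_corner_add_inner o a]
      simp [sub_mul, mul_sub, ← hγ]
  · rintro ⟨X, γ⟩ ⟨Y, ε⟩ ⟨-, hγ, hX⟩ ⟨-, hε, hY⟩
    have hXY : X = Y := by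
      ext c
      -- Scalar matrices are central, so only the entrywise part contributes to `D (c • 1)`.
      have h := (hX (c • 1)).symm.trans (hY (c • 1))
      simpa using congrFun (congrFun h o) o
    subst hXY
    have hcomm (i j : Fin n) : Commute (Matrix.single i j 1) (γ - ε) := by
      have h := add_left_cancel
        ((hX (Matrix.single i j 1)).symm.trans (hY (Matrix.single i j 1)))
      rw [commute_iff_eq, mul_sub, sub_mul]
      rw [sub_eq_sub_iff_add_eq_add] at h ⊢
      rw [add_comm, ← h, add_comm]
    obtain ⟨c, hc⟩ := Matrix.mem_range_scalar_of_commute_single fun i j _ => hcomm i j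
    have htr : (γ - ε).trace = 0 := by simp [Matrix.trace_sub, hγ, hε]
    have hc0 : c = 0 := by
      rw [← hc] at htr
      have h : (n : ℂ) • c = 0 := by simpa [Algebra.smul_def, Matrix.trace] using htr
      rw [← inv_smul_smul₀ hn0 c, h, smul_zero]
    rw [hc0, map_zero] at hc
    rw [sub_eq_zero.mp hc.symm]
end
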